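/- arXiv:2601.10237 — 2 statements merged into one kernel-verified Lean document; each statement's English description precedes it below -/
import Mathlib

section
/- Let M ≥ 2 be an integer and let σ be a real with 0 < σ ≤ 1/√(2·ln M). Define a* := 1 − Φ(1/σ)^M and ε_M := 2/(M·√(4π·ln M)). Then ((1 − a*) − (1/2)·(1 − a*)^{(M−1)/M})/√2 ≥ (1/√8)·(1 − 1/√(4π·ln M))·(1 − ε_M). -/
open MeasureTheory Real

/-- The standard normal cumulative distribution function
`Φ(x) = (1/√(2π)) ∫_{−∞}^x e^{−t²/2} dt`. -/
noncomputable def stdNormalCDF (x : ℝ) : ℝ :=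
  ∫ t in Set.Iic x, Real.exp (-t ^ 2 / 2) / Real.sqrt (2 * Real.pi)

/-!
Write `p = Φ(1/σ)`, so that `1 - a* = p ^ M` and the separation is `p ^ (M - 1) * (2 * p - 1) / √8`.
The noise bound says `1/σ ≥ √(2 ln M)`; there the Gaussian density is at most `1 / (M √(2π))`, and
the Mills ratio bound gives `p ≥ 1 - q` with `q = 1 / (M √(4π ln M))`. Bernoulli's inequality turns
this into `p ^ (M - 1) ≥ p ^ M ≥ 1 - M * q`, while `2 * p - 1 ≥ 1 - 2 * q = 1 - ε_M`. The argument
works for real `M` as long as `1 - M * q ≥ 0`, that is, `M ≥ exp (1 / (4π))`.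
-/

open Filter Set Topology

section GaussianTail

variable {b x : ℝ}

lemma hasDerivAt_neg_exp_neg_mul_sq_div (hb : b ≠ 0) (t : ℝ) :
    HasDerivAt (fun t ↦ -(exp (-b * t ^ 2) / (2 * b))) (t * exp (-b * t ^ 2)) t := by
  have hexp : HasDerivAt (fun t ↦ exp (-b * t ^ 2)) (exp (-b * t ^ 2) * (-b * (2 * t))) t := by
    simpa using ((hasDerivAt_pow 2 t).const_mul (-b)).exp
  refine (hexp.div_const (2 * b)).neg.congr_deriv ?_
  field_simp

lemma tendsto_exp_neg_mul_sq_atTop (hb : 0 < b) :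
    Tendsto (fun t ↦ exp (-b * t ^ 2)) atTop (𝓝 0) :=
  tendsto_exp_atBot.comp <|
    (tendsto_pow_atTop two_ne_zero).const_mul_atTop_of_neg (neg_neg_of_pos hb)

lemma integral_Ioi_mul_exp_neg_mul_sq (hb : 0 < b) (x : ℝ) :
    ∫ t in Ioi x, t * exp (-b * t ^ 2) = exp (-b * x ^ 2) / (2 * b) := by
  have hlim : Tendsto (fun t ↦ -(exp (-b * t ^ 2) / (2 * b))) atTop (𝓝 0) := by
    simpa using ((tendsto_exp_neg_mul_sq_atTop hb).div_const (2 * b)).neg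
  rw [integral_Ioi_of_hasDerivAt_of_tendsto'
    (fun t _ ↦ hasDerivAt_neg_exp_neg_mul_sq_div hb.ne' t)
    (integrable_mul_exp_neg_mul_sq hb).integrableOn hlim, zero_sub, neg_neg]

lemma integral_Ioi_exp_neg_mul_sq_le (hb : 0 < b) (hx : 0 < x) :
    ∫ t in Ioi x, exp (-b * t ^ 2) ≤ exp (-b * x ^ 2) / (2 * b * x) := by
  calc ∫ t in Ioi x, exp (-b * t ^ 2)
      ≤ ∫ t in Ioi x, t * exp (-b * t ^ 2) / x := by
        refine setIntegral_mono_on (integrable_exp_neg_mul_sq hb).integrableOn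
          ((integrable_mul_exp_neg_mul_sq hb).div_const x).integrableOn measurableSet_Ioi ?_
        intro t ht
        rw [le_div_iff₀ hx, mul_comm]
        exact mul_le_mul_of_nonneg_right (le_of_lt ht) (exp_pos _).le
    _ = exp (-b * x ^ 2) / (2 * b * x) := by
        rw [integral_div, integral_Ioi_mul_exp_neg_mul_sq hb, div_div]

end GaussianTail

section StdNormalCDF

variable {x M : ℝ}

lemma one_sub_stdNormalCDF (x : ℝ) :
    1 - stdNormalCDF x = (∫ t in Ioi x, exp (-(1 / 2) * t ^ 2)) / √(2 * π) := by
  have hint : Integrable fun t : ℝ ↦ exp (-(1 / 2) * t ^ 2) :=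
    integrable_exp_neg_mul_sq one_half_pos
  have htotal : ∫ t : ℝ, exp (-(1 / 2) * t ^ 2) = √(2 * π) := by
    rw [integral_gaussian, div_div_eq_mul_div, div_one, mul_comm]
  have hcdf : stdNormalCDF x = (∫ t in Iic x, exp (-(1 / 2) * t ^ 2)) / √(2 * π) := by
    have hsq (t : ℝ) : -t ^ 2 / 2 = -(1 / 2) * t ^ 2 := by ring
    simp_rw [stdNormalCDF, integral_div, hsq]
  have hsplit := intervalIntegral.integral_Iic_add_Ioi (b := x) hint.integrableOn hint.integrableOn
  rw [htotal] at hsplit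
  rw [hcdf, eq_div_iff (by positivity), sub_mul, div_mul_cancel₀ _ (by positivity)]
  linarith

lemma stdNormalCDF_le_one (x : ℝ) : stdNormalCDF x ≤ 1 := by
  rw [← sub_nonneg, one_sub_stdNormalCDF]
  positivity

lemma monotone_stdNormalCDF : Monotone stdNormalCDF := by
  intro x y hxy
  rw [← sub_le_sub_iff_left 1, one_sub_stdNormalCDF, one_sub_stdNormalCDF]
  gcongr
  · exact .of_forall fun t ↦ (exp_pos _).le
  · exact (integrable_exp_neg_mul_sq one_half_pos).integrableOn

lemma stdNormalCDF_zero : stdNormalCDF 0 = 1 / 2 := by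
  have htail : 1 - stdNormalCDF 0 = 1 / 2 := by
    rw [one_sub_stdNormalCDF, integral_gaussian_Ioi, div_div_eq_mul_div, div_one, mul_comm π,
      div_right_comm, div_self (by positivity)]
  linarith

lemma one_sub_stdNormalCDF_le (hx : 0 < x) :
    1 - stdNormalCDF x ≤ exp (-x ^ 2 / 2) / (x * √(2 * π)) := by
  rw [one_sub_stdNormalCDF, ← div_div]
  gcongr
  calc ∫ t in Ioi x, exp (-(1 / 2) * t ^ 2)
      ≤ exp (-(1 / 2) * x ^ 2) / (2 * (1 / 2) * x) :=
        integral_Ioi_exp_neg_mul_sq_le one_half_pos hx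
    _ = exp (-x ^ 2 / 2) / x := by ring_nf

lemma one_sub_stdNormalCDF_le_of_sqrt_two_mul_log_le (hM : 1 < M) (hx : √(2 * log M) ≤ x) :
    1 - stdNormalCDF x ≤ 1 / (M * √(4 * π * log M)) := by
  have hlog : 0 < log M := log_pos hM
  have hexp : exp (-√(2 * log M) ^ 2 / 2) = 1 / M := by
    rw [sq_sqrt (by positivity), neg_div, mul_div_cancel_left₀ _ two_ne_zero, exp_neg,
      exp_log (by positivity), one_div]
  calc 1 - stdNormalCDF x
      ≤ 1 - stdNormalCDF √(2 * log M) := sub_le_sub_left (monotone_stdNormalCDF hx) 1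
    _ ≤ 1 / M / (√(2 * log M) * √(2 * π)) := hexp ▸ one_sub_stdNormalCDF_le (by positivity)
    _ = 1 / (M * √(4 * π * log M)) := by
        rw [div_div, ← sqrt_mul (by positivity)]
        ring_nf

end StdNormalCDF

section Separation

variable {p q r : ℝ}

lemma rpow_sub_half_mul_rpow_rpow (hp : 0 < p) (hr : r ≠ 0) :
    p ^ r - 1 / 2 * (p ^ r) ^ ((r - 1) / r) = p ^ (r - 1) * (2 * p - 1) / 2 := by
  have hsucc : p ^ r = p ^ (r - 1) * p := by rw [← rpow_add_one hp.ne', sub_add_cancel]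
  rw [← rpow_mul hp.le, mul_div_cancel₀ _ hr, hsucc]
  ring

lemma one_add_mul_sub_one_le_rpow_sub_one (hp : 0 < p) (hp1 : p ≤ 1) (hr : 1 ≤ r) :
    1 + r * (p - 1) ≤ p ^ (r - 1) :=
  calc 1 + r * (p - 1)
      ≤ (1 + (p - 1)) ^ r := one_add_mul_self_le_rpow_one_add (by linarith) hr
    _ = p ^ r := by rw [add_sub_cancel]
    _ ≤ p ^ (r - 1) := rpow_le_rpow_of_exponent_ge hp hp1 (by linarith)

lemma mul_le_rpow_sub_half_mul_rpow_rpow (hp : 1 / 2 ≤ p) (hp1 : p ≤ 1) (hr : 1 ≤ r)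
    (hpq : 1 - p ≤ q) (hrq : r * q ≤ 1) :
    (1 - r * q) * (1 - 2 * q) / 2 ≤ p ^ r - 1 / 2 * (p ^ r) ^ ((r - 1) / r) := by
  have hp0 : 0 < p := by linarith
  have hbernoulli : 1 - r * q ≤ p ^ (r - 1) := by
    have := mul_le_mul_of_nonneg_left hpq (zero_le_one.trans hr)
    linarith [one_add_mul_sub_one_le_rpow_sub_one hp0 hp1 hr]
  rw [rpow_sub_half_mul_rpow_rpow hp0 (by positivity)]
  gcongr ?_ / 2
  calc (1 - r * q) * (1 - 2 * q)
      ≤ (1 - r * q) * (2 * p - 1) := mul_le_mul_of_nonneg_left (by linarith) (by linarith)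
    _ ≤ p ^ (r - 1) * (2 * p - 1) := mul_le_mul_of_nonneg_right hbernoulli (by linarith)

end Separation

lemma one_le_sqrt_four_mul_pi_mul_log {M : ℝ} (hM : exp (1 / (4 * π)) ≤ M) :
    1 ≤ √(4 * π * log M) := by
  have hlog : 1 / (4 * π) ≤ log M := (le_log_iff_exp_le ((exp_pos _).trans_le hM)).2 hM
  rwa [one_le_sqrt, ← div_le_iff₀' (by positivity)]

lemma exp_one_div_four_mul_pi_le_two : exp (1 / (4 * π)) ≤ 2 := by
  rw [← le_log_iff_exp_le two_pos]
  calc 1 / (4 * π) ≤ 1 / (4 * 3) := by gcongr; exact pi_gt_three.le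
    _ ≤ log 2 := by linarith [log_two_gt_d9]

theorem shuffled_separation_lower_bound_general {M σ : ℝ} (hM : exp (1 / (4 * π)) ≤ M)
    (hσ0 : 0 < σ) (hσ : σ ≤ 1 / √(2 * log M)) {astar εM : ℝ}
    (hastar : astar = 1 - stdNormalCDF (1 / σ) ^ M)
    (hεM : εM = 2 / (M * √(4 * π * log M))) :
    ((1 - astar) - (1 / 2) * (1 - astar) ^ ((M - 1) / M)) / √2
      ≥ (1 / √8) * (1 - 1 / √(4 * π * log M)) * (1 - εM) := by
  have hM1 : 1 < M := (one_lt_exp_iff.2 (by positivity)).trans_le hM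
  have hS : 1 ≤ √(4 * π * log M) := one_le_sqrt_four_mul_pi_mul_log hM
  have hlog : 0 < log M := log_pos hM1
  have hhalf : 1 / 2 ≤ stdNormalCDF (1 / σ) :=
    stdNormalCDF_zero ▸ monotone_stdNormalCDF (by positivity)
  have htail := one_sub_stdNormalCDF_le_of_sqrt_two_mul_log_le hM1
    ((le_one_div hσ0 (by positivity)).1 hσ)
  have hMq : M * (1 / (M * √(4 * π * log M))) = 1 / √(4 * π * log M) := by field_simp
  have hsep := mul_le_rpow_sub_half_mul_rpow_rpow hhalf (stdNormalCDF_le_one _) hM1.le htail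
    (hMq ▸ div_le_one_of_le₀ hS (by positivity))
  have hsqrt : √8 = 2 * √2 := by
    rw [← sqrt_sq zero_le_two, ← sqrt_mul (sq_nonneg 2)]
    norm_num
  rw [hMq, mul_one_div, ← hεM] at hsep
  rw [hastar, sub_sub_cancel, hsqrt, ge_iff_le]
  calc 1 / (2 * √2) * (1 - 1 / √(4 * π * log M)) * (1 - εM)
      = (1 - 1 / √(4 * π * log M)) * (1 - εM) / 2 / √2 := by field_simp
    _ ≤ _ := by gcongr

/-- analytic content of Theorem 6.1: for `M ≥ 2` and
`0 < σ ≤ 1/√(2 ln M)`, with `a* = 1 − Φ(1/σ)^M` and `ε_M = 2/(M √(4π ln M))`,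
the pointwise separation `((1−a*) − (1/2)(1−a*)^{(M−1)/M})/√2` is at least
`(1/√8)(1 − 1/√(4π ln M))(1 − ε_M)`. -/
theorem shuffled_separation_lower_bound
    (M : ℕ) (hM : 2 ≤ M) (σ : ℝ) (hσ0 : 0 < σ)
    (hσ : σ ≤ 1 / Real.sqrt (2 * Real.log M))
    (astar εM : ℝ)
    (hastar : astar = 1 - stdNormalCDF (1 / σ) ^ M)
    (hεM : εM = 2 / (M * Real.sqrt (4 * Real.pi * Real.log M))) :
    ((1 - astar) - (1 / 2) * (1 - astar) ^ (((M : ℝ) - 1) / M)) / Real.sqrt 2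
      ≥ (1 / Real.sqrt 8) * (1 - 1 / Real.sqrt (4 * Real.pi * Real.log M)) * (1 - εM) :=
  shuffled_separation_lower_bound_general
    (exp_one_div_four_mul_pi_le_two.trans (Nat.ofNat_le_cast.2 hM)) hσ0 hσ
    (by rw [hastar, rpow_natCast]) hεM
end

section
/- For μ > 0, define the Gaussian trade-off function G_μ : [0,1] → [0,1] by G_μ(α) = Φ(Φ⁻¹(1−α) − μ) (extended continuously by G_μ(0)=1, G_μ(1)=0). Then α* := Φ(−μ/2) is the unique fixed point of G_μ, and sup_{α∈[0,1]} ((1−α) − G_μ(α))/√2 = (1 − 2Φ(−μ/2))/√2 = (2Φ(μ/2) − 1)/√2. Moreover, the map μ ↦ (2Φ(μ/2) − 1)/√2 is strictly increasing on (0,∞). -/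
open MeasureTheory Real

/-- The inverse `Φ⁻¹` of the standard normal CDF (on `(0,1)`). -/
noncomputable def stdNormalCDFInv : ℝ → ℝ :=
  Function.invFun stdNormalCDF

/-- The Gaussian trade-off function `G_μ(α) = Φ(Φ⁻¹(1−α) − μ)`, extended continuously by
`G_μ(0) = 1` and `G_μ(1) = 0`. -/
noncomputable def gaussianTradeOff (μ α : ℝ) : ℝ :=
  if α = 0 then 1 else if α = 1 then 0
  else stdNormalCDF (stdNormalCDFInv (1 - α) - μ)

/-!
Every `α ∈ (0,1)` is `1 - Φ(x)` for exactly one `x`, and there `G_μ(α) = Φ(x - μ)`. Since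
`1 - Φ(x) = Φ(-x)`, the fixed points are the solutions of `x - μ = -x`, and the vertical gap
`1 - α - G_μ(α) = Φ(x) - Φ(x - μ)` is the Gaussian mass of the window `[x - μ, x]`. The density is
even and decreases away from `0`, so among all windows of length `μ` the one centred at `0` is the
heaviest; it corresponds to `x = μ / 2`, the fixed point.
-/

section SymmetricUnimodal

lemma apply_le_apply_of_abs_le_of_even_of_antitoneOn {G β : Type*} [AddCommGroup G]
    [LinearOrder G] [IsOrderedAddMonoid G] [Preorder β] {f : G → β} (heven : Function.Even f)
    (hanti : AntitoneOn f (Set.Ici 0)) {x y : G} (hxy : |x| ≤ |y|) : f y ≤ f x := by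
  have hf_abs (z : G) : f |z| = f z := by
    rcases abs_choice z with h | h <;> simp only [h, heven z]
  simpa only [hf_abs] using hanti (abs_nonneg x) (abs_nonneg y) hxy

variable {f : ℝ → ℝ}

lemma intervalIntegrable_of_even_of_antitoneOn (heven : Function.Even f)
    (hanti : AntitoneOn f (Set.Ici 0)) (a b : ℝ) : IntervalIntegrable f volume a b := by
  have hpos {c : ℝ} (hc : 0 ≤ c) : IntervalIntegrable f volume 0 c :=
    (hanti.mono (Set.uIcc_of_le hc ▸ Set.Icc_subset_Ici_self)).intervalIntegrable
  have hzero (c : ℝ) : IntervalIntegrable f volume 0 c := by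
    rcases le_total 0 c with hc | hc
    · exact hpos hc
    · rw [IntervalIntegrable.iff_comp_neg]
      simpa only [heven _, neg_zero] using hpos (neg_nonneg.2 hc)
  exact (hzero a).symm.trans (hzero b)

lemma intervalIntegral_sub_add_le_of_even_of_antitoneOn (heven : Function.Even f)
    (hanti : AntitoneOn f (Set.Ici 0)) {a : ℝ} (ha : 0 ≤ a) (c : ℝ) :
    ∫ t in (c - a)..(c + a), f t ≤ ∫ t in (-a)..a, f t := by
  wlog hc : 0 ≤ c generalizing c
  · calc ∫ t in (c - a)..(c + a), f t
        = ∫ t in (c - a)..(c + a), f (-t) := by simp only [heven _]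
      _ = ∫ t in (-c - a)..(-c + a), f t := by
        rw [intervalIntegral.integral_comp_neg]
        congr 1 <;> ring
      _ ≤ ∫ t in (-a)..a, f t := this (-c) (by linarith)
  have hint := intervalIntegrable_of_even_of_antitoneOn heven hanti
  -- Sliding the centred window to the right by `c` trades `[-a, c - a]` for `[a, c + a]`.
  have hslide : (∫ t in (-a)..a, f t) - ∫ t in (c - a)..(c + a), f t
      = (∫ t in (0)..c, f (t - a)) - ∫ t in (0)..c, f (t + a) := by
    rw [intervalIntegral.integral_interval_sub_interval_comm (hint _ _) (hint _ _) (hint _ _),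
      intervalIntegral.integral_comp_sub_right, intervalIntegral.integral_comp_add_right, zero_sub,
      zero_add]
  have hle : ∫ t in (0)..c, f (t + a) ≤ ∫ t in (0)..c, f (t - a) := by
    refine intervalIntegral.integral_mono_on hc ?_ ?_ fun t ht ↦ ?_
    · simpa using (hint (0 + a) (c + a)).comp_add_right a
    · simpa using (hint (0 - a) (c - a)).comp_sub_right a
    · refine apply_le_apply_of_abs_le_of_even_of_antitoneOn heven hanti (abs_le_abs ?_ ?_) <;>
        linarith [ht.1]
  linarith

end SymmetricUnimodal

section CDF

open ProbabilityTheory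

variable (ν : Measure ℝ) [IsProbabilityMeasure ν]

lemma strictMono_cdf [ν.IsOpenPosMeasure] : StrictMono (cdf ν) := by
  intro x y hxy
  have hpos : 0 < (cdf ν).measure (Set.Ioc x y) := by
    rw [measure_cdf]
    exact ((Measure.measure_Ioo_pos ν).2 hxy).trans_le (measure_mono Set.Ioo_subset_Ioc_self)
  rwa [StieltjesFunction.measure_Ioc, ENNReal.ofReal_pos, sub_pos] at hpos

lemma continuous_cdf [NullSingletonClass ν] : Continuous (cdf ν) := by
  refine continuous_iff_continuousAt.2 fun x ↦ ?_
  rw [(monotone_cdf ν).continuousAt_iff_leftLim_eq_rightLim, StieltjesFunction.rightLim_eq]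
  refine ((monotone_cdf ν).leftLim_le le_rfl).antisymm ?_
  have hjump : (cdf ν).measure {x} = 0 := by rw [measure_cdf, measure_singleton]
  rwa [StieltjesFunction.measure_singleton, ENNReal.ofReal_eq_zero, sub_nonpos] at hjump

lemma range_cdf [NullSingletonClass ν] [ν.IsOpenPosMeasure] :
    Set.range (cdf ν) = Set.Ioo 0 1 := by
  refine Set.Subset.antisymm ?_ fun a ha ↦ ?_
  · rintro _ ⟨x, rfl⟩
    exact ⟨(cdf_nonneg ν (x - 1)).trans_lt (strictMono_cdf ν (sub_one_lt x)),
      (strictMono_cdf ν (lt_add_one x)).trans_le (cdf_le_one ν (x + 1))⟩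
  · obtain ⟨y, hy⟩ := ((tendsto_cdf_atBot ν).eventually_le_const ha.1).exists
    obtain ⟨z, hz⟩ := ((tendsto_cdf_atTop ν).eventually_const_le ha.2).exists
    exact mem_range_of_exists_le_of_exists_ge (continuous_cdf ν) ⟨y, hy⟩ ⟨z, hz⟩

lemma cdf_neg [NullSingletonClass ν] [ν.IsNegInvariant] (x : ℝ) :
    cdf ν (-x) = 1 - cdf ν x := by
  calc cdf ν (-x) = ν.real (-Set.Ici x) := by rw [cdf_eq_real, Set.neg_Ici]
    _ = ν.real (Set.Ici x) := by rw [measureReal_def, measureReal_def, Measure.measure_neg]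
    _ = ν.real (Set.Iic x)ᶜ := by rw [Set.compl_Iic, measureReal_congr Ioi_ae_eq_Ici]
    _ = 1 - cdf ν x := by rw [probReal_compl_eq_one_sub measurableSet_Iic, cdf_eq_real]

end CDF

section Gaussian

open ProbabilityTheory
open scoped NNReal

lemma even_gaussianPDFReal_zero (v : ℝ≥0) : Function.Even (gaussianPDFReal 0 v) := by
  intro x
  simp [gaussianPDFReal]

lemma antitoneOn_gaussianPDFReal (m : ℝ) (v : ℝ≥0) :
    AntitoneOn (gaussianPDFReal m v) (Set.Ici m) := by
  intro x hx y _ hxy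
  have hx' : 0 ≤ x - m := sub_nonneg.2 hx
  unfold gaussianPDFReal
  gcongr

lemma isOpenPosMeasure_gaussianReal (m : ℝ) {v : ℝ≥0} (hv : v ≠ 0) :
    (gaussianReal m v).IsOpenPosMeasure :=
  (gaussianReal_absolutelyContinuous' m hv).isOpenPosMeasure

instance isNegInvariant_gaussianReal_zero (v : ℝ≥0) : (gaussianReal 0 v).IsNegInvariant where
  neg_eq_self := by rw [Measure.neg_def, gaussianReal_map_neg, neg_zero]

instance : (gaussianReal 0 1).IsOpenPosMeasure := isOpenPosMeasure_gaussianReal 0 one_ne_zero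

instance : NullSingletonClass (gaussianReal 0 1) := nullSingletonClass_gaussianReal one_ne_zero

lemma stdNormalCDF_eq_integral_gaussianPDFReal (x : ℝ) :
    stdNormalCDF x = ∫ t in Set.Iic x, gaussianPDFReal 0 1 t := by
  simp [stdNormalCDF, gaussianPDFReal, div_eq_inv_mul]

lemma stdNormalCDF_eq_cdf : stdNormalCDF = cdf (gaussianReal 0 1) := by
  funext x
  rw [stdNormalCDF_eq_integral_gaussianPDFReal, cdf_eq_real, measureReal_def,
    gaussianReal_apply_eq_integral 0 one_ne_zero, ENNReal.toReal_ofReal]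
  exact integral_nonneg (gaussianPDFReal_nonneg 0 1)

lemma strictMono_stdNormalCDF : StrictMono stdNormalCDF :=
  stdNormalCDF_eq_cdf ▸ strictMono_cdf _

lemma range_stdNormalCDF : Set.range stdNormalCDF = Set.Ioo 0 1 :=
  stdNormalCDF_eq_cdf ▸ range_cdf _

lemma stdNormalCDF_mem_Ioo (x : ℝ) : stdNormalCDF x ∈ Set.Ioo 0 1 :=
  range_stdNormalCDF ▸ Set.mem_range_self x

lemma stdNormalCDF_neg (x : ℝ) : stdNormalCDF (-x) = 1 - stdNormalCDF x :=
  stdNormalCDF_eq_cdf ▸ cdf_neg _ x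

lemma stdNormalCDFInv_stdNormalCDF (x : ℝ) : stdNormalCDFInv (stdNormalCDF x) = x :=
  Function.leftInverse_invFun strictMono_stdNormalCDF.injective x

lemma stdNormalCDF_sub_stdNormalCDF (a b : ℝ) :
    stdNormalCDF b - stdNormalCDF a = ∫ t in a..b, gaussianPDFReal 0 1 t := by
  have hint := integrable_gaussianPDFReal 0 1
  rw [← intervalIntegral.integral_Iic_sub_Iic hint.integrableOn hint.integrableOn]
  simp only [stdNormalCDF_eq_integral_gaussianPDFReal]

lemma stdNormalCDF_sub_stdNormalCDF_sub_le {μ : ℝ} (hμ : 0 ≤ μ) (x : ℝ) :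
    stdNormalCDF x - stdNormalCDF (x - μ) ≤ stdNormalCDF (μ / 2) - stdNormalCDF (-(μ / 2)) := by
  have hwindow := intervalIntegral_sub_add_le_of_even_of_antitoneOn (even_gaussianPDFReal_zero 1)
    (antitoneOn_gaussianPDFReal 0 1) (a := μ / 2) (by positivity) (x - μ / 2)
  rwa [sub_add_cancel, sub_sub, add_halves, ← stdNormalCDF_sub_stdNormalCDF,
    ← stdNormalCDF_sub_stdNormalCDF] at hwindow

end Gaussian

section TradeOff

lemma gaussianTradeOff_zero (μ : ℝ) : gaussianTradeOff μ 0 = 1 := if_pos rfl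

lemma gaussianTradeOff_one (μ : ℝ) : gaussianTradeOff μ 1 = 0 := by simp [gaussianTradeOff]

lemma gaussianTradeOff_stdNormalCDF_neg (μ x : ℝ) :
    gaussianTradeOff μ (stdNormalCDF (-x)) = stdNormalCDF (x - μ) := by
  obtain ⟨hpos, hlt⟩ := stdNormalCDF_mem_Ioo (-x)
  rw [gaussianTradeOff, if_neg hpos.ne', if_neg hlt.ne, ← stdNormalCDF_neg, neg_neg,
    stdNormalCDFInv_stdNormalCDF]

lemma eq_zero_or_eq_one_or_exists_stdNormalCDF_neg {α : ℝ} (hα : α ∈ Set.Icc 0 1) :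
    α = 0 ∨ α = 1 ∨ ∃ x, stdNormalCDF (-x) = α := by
  rcases Set.eq_endpoints_or_mem_Ioo_of_mem_Icc hα with h | h | h
  · exact .inl h
  · exact .inr (.inl h)
  · obtain ⟨x, rfl⟩ := range_stdNormalCDF ▸ h
    exact .inr (.inr ⟨-x, by rw [neg_neg]⟩)

lemma gaussianTradeOff_eq_self_iff (μ : ℝ) {α : ℝ} (hα : α ∈ Set.Icc 0 1) :
    gaussianTradeOff μ α = α ↔ α = stdNormalCDF (-(μ / 2)) := by
  obtain ⟨hpos, hlt⟩ := stdNormalCDF_mem_Ioo (-(μ / 2))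
  rcases eq_zero_or_eq_one_or_exists_stdNormalCDF_neg hα with rfl | rfl | ⟨x, rfl⟩
  · simp [gaussianTradeOff_zero, hpos.ne]
  · simp [gaussianTradeOff_one, hlt.ne']
  · rw [gaussianTradeOff_stdNormalCDF_neg, strictMono_stdNormalCDF.injective.eq_iff,
      strictMono_stdNormalCDF.injective.eq_iff]
    constructor <;> intro h <;> linarith

lemma one_sub_sub_gaussianTradeOff_le {μ : ℝ} (hμ : 0 ≤ μ) {α : ℝ} (hα : α ∈ Set.Icc 0 1) :
    1 - α - gaussianTradeOff μ α ≤ 1 - 2 * stdNormalCDF (-(μ / 2)) := by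
  have hhalf : stdNormalCDF (-(μ / 2)) ≤ stdNormalCDF (μ / 2) :=
    strictMono_stdNormalCDF.monotone (by linarith)
  have hneg := stdNormalCDF_neg (μ / 2)
  rcases eq_zero_or_eq_one_or_exists_stdNormalCDF_neg hα with rfl | rfl | ⟨x, rfl⟩
  · rw [gaussianTradeOff_zero]; linarith
  · rw [gaussianTradeOff_one]; linarith
  · rw [gaussianTradeOff_stdNormalCDF_neg, stdNormalCDF_neg x]
    linarith [stdNormalCDF_sub_stdNormalCDF_sub_le hμ x]

lemma isGreatest_separation_gaussianTradeOff {μ : ℝ} (hμ : 0 ≤ μ) :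
    IsGreatest ((fun α ↦ (1 - α - gaussianTradeOff μ α) / √2) '' Set.Icc 0 1)
      ((1 - 2 * stdNormalCDF (-(μ / 2))) / √2) := by
  constructor
  · have hmem := Set.Ioo_subset_Icc_self (stdNormalCDF_mem_Ioo (-(μ / 2)))
    refine ⟨_, hmem, ?_⟩
    simp only [(gaussianTradeOff_eq_self_iff μ hmem).2 rfl]
    ring
  · rintro _ ⟨α, hα, rfl⟩
    exact div_le_div_of_nonneg_right (one_sub_sub_gaussianTradeOff_le hμ hα) (Real.sqrt_nonneg 2)

end TradeOff

/-- Lemma E.1: for `μ > 0`, `α* = Φ(−μ/2)` is the unique fixed point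
of the Gaussian trade-off function `G_μ` on `[0,1]`, the separation
`sup_{α∈[0,1]} ((1−α) − G_μ(α))/√2` equals `(1 − 2Φ(−μ/2))/√2 = (2Φ(μ/2) − 1)/√2`, and
`μ ↦ (2Φ(μ/2) − 1)/√2` is strictly increasing on `(0,∞)`. -/
theorem gaussian_tradeoff_separation
    (μ : ℝ) (hμ : 0 < μ) :
    gaussianTradeOff μ (stdNormalCDF (-(μ / 2))) = stdNormalCDF (-(μ / 2)) ∧
    (∀ α ∈ Set.Icc (0 : ℝ) 1, gaussianTradeOff μ α = α → α = stdNormalCDF (-(μ / 2))) ∧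
    sSup ((fun α => ((1 - α) - gaussianTradeOff μ α) / Real.sqrt 2) '' Set.Icc 0 1)
      = (1 - 2 * stdNormalCDF (-(μ / 2))) / Real.sqrt 2 ∧
    (1 - 2 * stdNormalCDF (-(μ / 2))) / Real.sqrt 2
      = (2 * stdNormalCDF (μ / 2) - 1) / Real.sqrt 2 ∧
    StrictMonoOn (fun m : ℝ => (2 * stdNormalCDF (m / 2) - 1) / Real.sqrt 2)
      (Set.Ioi (0 : ℝ)) := by
  have hmem := Set.Ioo_subset_Icc_self (stdNormalCDF_mem_Ioo (-(μ / 2)))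
  refine ⟨(gaussianTradeOff_eq_self_iff μ hmem).2 rfl,
    fun α hα ↦ (gaussianTradeOff_eq_self_iff μ hα).1,
    (isGreatest_separation_gaussianTradeOff hμ.le).csSup_eq, ?_, fun a _ b _ hab ↦ ?_⟩
  · rw [stdNormalCDF_neg]
    ring
  · have hlt : stdNormalCDF (a / 2) < stdNormalCDF (b / 2) :=
      strictMono_stdNormalCDF (by linarith)
    dsimp only
    gcongr
end
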